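/- Let K be a semi-symmetric algebraic curvature tensor on a pseudo-Euclidean space (V,⟨·,·⟩), with Ricci operator Ric_K and minimal polynomial χ of Ric_K. Let W be either V₀ := ker(Ric_K²) or V_P := ker(P(Ric_K)) for a monic irreducible real factor P of χ different from X. Then W is invariant under the primitive holonomy of K: K(u,v)(W) ⊆ W for all u,v ∈ V. -/

import Mathlib

open Polynomial

/-- The linear map `a ↦ K u a v`, whose trace gives the Ricci curvature `ric(u,v)`. -/
def ricMap {V : Type*} [AddCommGroup V] [Module ℝ V]
    (K : V →ₗ[ℝ] V →ₗ[ℝ] Module.End ℝ V) (u v : V) : V →ₗ[ℝ] V where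
  toFun a := K u a v
  map_add' a b := by simp
  map_smul' r a := by simp

/-!
An infinitesimal isometry `A` that preserves `K` preserves everything built from `K` and the metric,
in particular the Ricci operator, so `A` commutes with `Ric` and hence preserves the kernel of every
polynomial in `Ric`. The curvature operators `K u v` are such endomorphisms: they are skew-adjoint,
and semi-symmetry says exactly that they preserve `K`.
-/

section RicciOperator

variable {R V : Type*} [CommRing R] [AddCommGroup V] [Module R V]

/-- The endomorphism `A` preserves the tensor `K` infinitesimally: it acts as a derivation on
`(a, b) ↦ K a b`. -/
def IsCurvatureDerivation (K : V →ₗ[R] V →ₗ[R] Module.End R V) (A : Module.End R V) : Prop :=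
  ∀ a b, ⁅A, K a b⁆ = K (A a) b + K a (A b)

/-- Semi-symmetric tensors: the curvature operators preserve the curvature tensor. -/
def IsSemisymmetric (K : V →ₗ[R] V →ₗ[R] Module.End R V) : Prop :=
  ∀ u v, IsCurvatureDerivation K (K u v)

/-- The Ricci form `ric(u,v) = tr (a ↦ K u a v)`. The trace is the junk value `0` when `V` has no
finite basis. -/
noncomputable def ricciForm (K : V →ₗ[R] V →ₗ[R] Module.End R V) : LinearMap.BilinForm R V :=
  ((LinearMap.lflip (R₀ := R)).toLinearMap ∘ₗ K).compr₂ (LinearMap.trace R V)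

lemma ricciForm_apply (K : V →ₗ[R] V →ₗ[R] Module.End R V) (u v : V) :
    ricciForm K u v = LinearMap.trace R V ((K u).flip v) := rfl

lemma IsCurvatureDerivation.flip_apply_eq {K : V →ₗ[R] V →ₗ[R] Module.End R V}
    {A : Module.End R V} (hA : IsCurvatureDerivation K A) (x y : V) :
    (K (A x)).flip y = ⁅A, (K x).flip y⁆ - (K x).flip (A y) := by
  ext a
  have hxa : A (K x a y) - K x a (A y) = K (A x) a y + K x (A a) y :=
    LinearMap.congr_fun (hA x a) y
  simp only [Ring.lie_def, LinearMap.sub_apply, Module.End.mul_apply, LinearMap.flip_apply]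
  rw [sub_right_comm, hxa, add_sub_cancel_right]

lemma IsCurvatureDerivation.isSkewAdjoint_ricciForm {K : V →ₗ[R] V →ₗ[R] Module.End R V}
    {A : Module.End R V} (hA : IsCurvatureDerivation K A) : (ricciForm K).IsSkewAdjoint A := by
  intro x y
  rw [ricciForm_apply, hA.flip_apply_eq, map_sub, LinearMap.trace_lie, zero_sub, Pi.neg_apply,
    map_neg, ricciForm_apply]

lemma isSkewAdjoint_of_apply_eq_neg {B : LinearMap.BilinForm R V} (hB : ∀ x y, B x y = B y x)
    {A : Module.End R V} (hA : ∀ x y, B (A x) y = -B (A y) x) : B.IsSkewAdjoint A := fun x y => by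
  rw [hA, hB, Pi.neg_apply, map_neg]

lemma commute_of_isAdjointPair {B : LinearMap.BilinForm R V} (hB : B.SeparatingLeft)
    {T f : Module.End R V} {g : V → V} (hf : LinearMap.IsAdjointPair B B f g)
    (hTf : LinearMap.IsAdjointPair (B ∘ₗ T) (B ∘ₗ T) f g) : Commute T f := by
  ext x
  refine sub_eq_zero.mp (hB _ fun y => ?_)
  rw [map_sub, LinearMap.sub_apply, sub_eq_zero]
  calc B (T (f x)) y = B (T x) (g y) := hTf x y
    _ = B (f (T x)) y := (hf (T x) y).symm

lemma IsCurvatureDerivation.commute_ricci {B : LinearMap.BilinForm R V} (hB : B.SeparatingLeft)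
    {K : V →ₗ[R] V →ₗ[R] Module.End R V} {A Ric : Module.End R V}
    (hA : IsCurvatureDerivation K A) (hBA : B.IsSkewAdjoint A)
    (hRic : ∀ u v, B (Ric u) v = ricciForm K u v) : Commute Ric A := by
  have hBRic : B ∘ₗ Ric = ricciForm K := LinearMap.ext₂ hRic
  exact commute_of_isAdjointPair hB hBA (hBRic ▸ hA.isSkewAdjoint_ricciForm)

lemma ker_aeval_mem_invtSubmodule {T A : Module.End R V} (h : Commute T A) (p : R[X]) :
    LinearMap.ker (aeval T p) ∈ A.invtSubmodule := by
  have hp : Commute A (aeval T p) :=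
    Algebra.commute_of_mem_adjoin_singleton_of_commute (aeval_mem_adjoin_singleton R T) h.symm
  intro w hw
  have hw0 : aeval T p w = 0 := hw
  change aeval T p (A w) = 0
  rw [← Module.End.mul_apply, ← hp.eq, Module.End.mul_apply, hw0, map_zero]

theorem stmt4_general [Module.Free R V] [Module.Finite R V]
    {B : LinearMap.BilinForm R V} (hB : B.SeparatingLeft)
    {K : V →ₗ[R] V →ₗ[R] Module.End R V} (hBK : ∀ u v, B.IsSkewAdjoint (K u v))
    (hK : IsSemisymmetric K) {Ric : Module.End R V}
    (hRic : ∀ u v, B (Ric u) v = ricciForm K u v) (p : R[X]) (u v : V) :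
    LinearMap.ker (aeval Ric p) ∈ (K u v).invtSubmodule :=
  ker_aeval_mem_invtSubmodule ((hK u v).commute_ricci hB (hBK u v) hRic) p

end RicciOperator

lemma ricciForm_eq_trace_ricMap {V : Type*} [AddCommGroup V] [Module ℝ V]
    (K : V →ₗ[ℝ] V →ₗ[ℝ] Module.End ℝ V) (u v : V) :
    ricciForm K u v = LinearMap.trace ℝ V (ricMap K u v) := rfl

theorem stmt4 {V : Type*} [AddCommGroup V] [Module ℝ V] [FiniteDimensional ℝ V]
    (B : LinearMap.BilinForm ℝ V) (hB : ∀ u v, B u v = B v u) (hBnd : B.Nondegenerate)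
    (K : V →ₗ[ℝ] V →ₗ[ℝ] Module.End ℝ V)
    (hK1 : ∀ u v, K u v = - K v u)
    (hK2 : ∀ u v w t, B (K u v w) t = - B (K u v t) w)
    (hK3 : ∀ u v w t, B (K u v w) t = B (K w t u) v)
    (hK4 : ∀ u v w, K u v w + K v w u + K w u v = 0)
    (hss : ∀ u v a b, K u v * K a b - K a b * K u v
        = K ((K u v) a) b + K a ((K u v) b))
    (Ric : Module.End ℝ V)
    (hRic : ∀ u v, B (Ric u) v = LinearMap.trace ℝ V (ricMap K u v))
    (W : Submodule ℝ V)
    (hW : W = LinearMap.ker (Ric ^ 2) ∨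
      ∃ P : Polynomial ℝ, P.Monic ∧ Irreducible P ∧ P ≠ X ∧ P ∣ minpoly ℝ Ric ∧
        W = LinearMap.ker (Polynomial.aeval Ric P)) :
    ∀ u v : V, ∀ w ∈ W, K u v w ∈ W := by
  have hBK (u v : V) : B.IsSkewAdjoint (K u v) := isSkewAdjoint_of_apply_eq_neg hB (hK2 u v)
  have hRicciForm (u v : V) : B (Ric u) v = ricciForm K u v :=
    (hRic u v).trans (ricciForm_eq_trace_ricMap K u v).symm
  obtain ⟨p, rfl⟩ : ∃ p : ℝ[X], W = LinearMap.ker (aeval Ric p) :=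
    hW.elim (fun h => ⟨X ^ 2, by rw [h, aeval_X_pow]⟩) fun ⟨P, _, _, _, _, h⟩ => ⟨P, h⟩
  exact stmt4_general hBnd.1 hBK hss hRicciForm p
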